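/- With notation as usual, define Q(B) = Σ_{u₂ ≤ ξ₃} u₂^{−n} · Σ'_{|t₁|,…,|tₙ| ≤ u₂^{9/10}/B^{4/5}} S(t₁,…,tₙ; u₂), and for U > 1 let Q_U(B) denote the contribution to Q(B) from u₂ ∈ (U/2, U]. Then there exists a positive constant C₅ such that for all U > 1, Q_U(B) = O(U^{9/10}·(log B)^{C₅}/B^{8/5}). -/

import Mathlib

open MvPolynomial Filter Pointwise

noncomputable section

/-- The linear form with coefficient vector `c`. -/
def linForm {R : Type*} [CommRing R] {n : ℕ} (c : Fin n → R) : MvPolynomial (Fin n) R :=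
  ∑ i, C (c i) * X i

/-- `ρ_F(m)`: the number of zeros of `F` in `(ℤ/mℤ)ⁿ`. -/
def rhoF {n : ℕ} (F : MvPolynomial (Fin n) ℤ) (m : ℕ) : ℕ :=
  Nat.card {a : Fin n → ZMod m // MvPolynomial.eval a (F.map (Int.castRingHom (ZMod m))) = 0}

/-- The discriminant `Δ(F) = ∏_{i₁<⋯<iₙ} |det(L_{i₁},…,L_{iₙ})|`, the product being over
all `n`-element subsets of the linear factors (parametrized by strictly monotone maps). -/
def discProd {n d : ℕ} (L : Fin d → Fin n → ℂ) : ℝ :=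
  ∏ᶠ g ∈ {g : Fin n → Fin d | StrictMono g},
    ‖Matrix.det (Matrix.of fun i j => L (g i) j)‖

/-- `F` is a decomposable form with linear factors `L₁,…,L_d` having
algebraic-integer coefficients. -/
def IsDecomp {n d : ℕ} (F : MvPolynomial (Fin n) ℤ) (L : Fin d → Fin n → ℂ) : Prop :=
  (∀ j i, IsIntegral ℤ (L j i)) ∧ F.map (Int.castRingHom ℂ) = ∏ j, linForm (L j)

/-- An integer is `k`-free if it is divisible by no `k`-th power of a prime. -/
def KFree (k : ℕ) (N : ℤ) : Prop := ∀ p : ℕ, p.Prime → ¬ ((p : ℤ) ^ k ∣ N)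

/-- `N_{F,k}(B)`. -/
def NFk {n : ℕ} (F : MvPolynomial (Fin n) ℤ) (k : ℕ) (B : ℝ) : ℕ :=
  Set.ncard {x : Fin n → ℤ | (∀ i, |(x i : ℝ)| ≤ B) ∧ KFree k (MvPolynomial.eval x F)}

def log1 (x : ℝ) : ℝ := max 1 (Real.log x)
def log2 (x : ℝ) : ℝ := log1 (log1 x)
def log3 (x : ℝ) : ℝ := log1 (log2 x)

/-- `ξ₁` is eventually increasing, tends to infinity and is `O(log₂ B / log₃ B)`. -/
def Xi1Good (ξ₁ : ℝ → ℝ) : Prop :=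
  (∃ B₀ : ℝ, ∀ ⦃B B' : ℝ⦄, B₀ ≤ B → B ≤ B' → ξ₁ B ≤ ξ₁ B') ∧
  Tendsto ξ₁ atTop atTop ∧ (ξ₁ =O[atTop] fun B => log2 B / log3 B)

def xi2 (n : ℕ) (B : ℝ) : ℝ := B ^ n * Real.log B ^ ((2 : ℝ) / 3)

def xi3 (C₁ : ℝ) (k : ℕ) (B : ℝ) : ℝ := C₁ * B ^ 2 * Real.log B ^ (-(2 * (k : ℝ)) / 3)

/-- `C(ξ₁) = ∏_{p ≤ ξ₁} p^{k-1}`. -/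
def Cxi (k : ℕ) (ξ : ℝ) : ℕ := ∏ᶠ p ∈ {p : ℕ | p.Prime ∧ (p : ℝ) ≤ ξ}, p ^ (k - 1)

/-- `𝒟(u₂) = ∏ p` over primes `ξ₁ < p ≤ (1/12)log(B²/u₂)`, `p ∤ u₂`, `p ≡ 1 (mod k)`. -/
def scrD (k : ℕ) (ξ₁ B : ℝ) (u₂ : ℕ) : ℕ :=
  ∏ᶠ p ∈ {p : ℕ | p.Prime ∧ ξ₁ < (p : ℝ) ∧ (p : ℝ) ≤ Real.log (B ^ 2 / (u₂ : ℝ)) / 12 ∧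
      ¬ p ∣ u₂ ∧ p % k = 1}, p

/-- The set `𝒮_p ⊆ 𝔽_pⁿ` attached to a factorization `F = F*·∏𝓛ᵢ` over `ℤ_p`. -/
def Sp {n : ℕ} (p : ℕ) (hp : p.Prime) {τ : ℕ}
    (𝓛 : Fin τ → Fin n → @PadicInt p ⟨hp⟩)
    (Fstar : MvPolynomial (Fin n) (@PadicInt p ⟨hp⟩)) (x : Fin n → ZMod p) : Prop :=
  (∃ i j : Fin τ, i < j ∧ (∑ m, (@PadicInt.toZMod p ⟨hp⟩) (𝓛 i m) * x m) = 0 ∧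
      (∑ m, (@PadicInt.toZMod p ⟨hp⟩) (𝓛 j m) * x m) = 0) ∨
  MvPolynomial.eval x (Fstar.map (@PadicInt.toZMod p ⟨hp⟩)) = 0

/-- The data `(𝓛ᵢ, F*)` is a factorization of `F` over `ℤ_p` with `F*` having no
linear factor over `ℚ_p`. -/
def IsPadicFact {n : ℕ} (F : MvPolynomial (Fin n) ℤ) (p : ℕ) (hp : p.Prime) {τ : ℕ}
    (𝓛 : Fin τ → Fin n → @PadicInt p ⟨hp⟩)
    (Fstar : MvPolynomial (Fin n) (@PadicInt p ⟨hp⟩)) : Prop :=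
  F.map (Int.castRingHom (@PadicInt p ⟨hp⟩)) = Fstar * ∏ i, linForm (𝓛 i) ∧
  ∀ c : Fin n → @Padic p ⟨hp⟩, (∃ i, c i ≠ 0) →
    ¬ (linForm c ∣ Fstar.map (@PadicInt.Coe.ringHom p ⟨hp⟩))


-- τ_F(p) intrinsically: number of linear factors of F mod p up to scaling
def tauFp {n : ℕ} (F : MvPolynomial (Fin n) ℤ) (p : ℕ) : ℕ :=
  Nat.card {c : Fin n → ZMod p //
    (∃ i, c i = 1 ∧ ∀ j, j < i → c j = 0) ∧
    linForm c ∣ F.map (Int.castRingHom (ZMod p))}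

def tauF {n : ℕ} (F : MvPolynomial (Fin n) ℤ) (m : ℕ) : ℕ :=
  ∏ p ∈ m.primeFactors, tauFp F p

def sigmaPow (α : ℝ) (m : ℕ) : ℝ := ∑ s ∈ m.divisors, (s : ℝ) ^ α

-- sup norm / lattice minimum / lattice point count
def supNorm {n : ℕ} (x : Fin n → ℤ) : ℕ := Finset.univ.sup fun i => (x i).natAbs

def latMin {n : ℕ} (Λ : AddSubgroup (Fin n → ℤ)) : ℕ :=
  sInf {m : ℕ | ∃ x ∈ Λ, x ≠ 0 ∧ supNorm x = m}

def NLat {n : ℕ} (Λ : AddSubgroup (Fin n → ℤ)) (B : ℝ) : ℕ :=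
  Set.ncard {x : Fin n → ℤ | x ∈ Λ ∧ ∀ i, |(x i : ℝ)| ≤ B}

-- the H_{u₁,u₂}(B) count
def Hcount {n : ℕ} (F : MvPolynomial (Fin n) ℤ)
    {τ : ∀ p : ℕ, p.Prime → ℕ}
    (𝓛 : ∀ (p : ℕ) (hp : p.Prime), Fin (τ p hp) → Fin n → @PadicInt p ⟨hp⟩)
    (Fstar : ∀ (p : ℕ) (hp : p.Prime), MvPolynomial (Fin n) (@PadicInt p ⟨hp⟩))
    (k u₁ u₂ D : ℕ) (B : ℝ) : ℕ :=
  Set.ncard {m : Fin n → ℤ | (∀ i, |(m i : ℝ)| ≤ B) ∧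
    (u₁ : ℤ) ∣ MvPolynomial.eval m F ∧ (u₂ : ℤ) ∣ MvPolynomial.eval m F ∧
    (∃ s : ℕ, s < D ∧ (D : ℤ) ∣ (MvPolynomial.eval m F - (u₁ : ℤ) * u₂ * (s : ℤ) ^ k)) ∧
    ∀ (p : ℕ) (hp : p.Prime), p ∣ u₁ * u₂ →
      ¬ Sp p hp (𝓛 p hp) (Fstar p hp) (fun i => ((m i : ZMod p)))}

-- N₃(B)
def N3count {n : ℕ} (F : MvPolynomial (Fin n) ℤ) (k : ℕ) (ξ₁ ξ₂ B : ℝ) : ℕ :=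
  Set.ncard {x : Fin n → ℤ | (∀ i, |(x i : ℝ)| ≤ B) ∧
    (∃ p : ℕ, p.Prime ∧ ξ₂ < (p : ℝ) ∧ (p : ℤ) ^ k ∣ MvPolynomial.eval x F) ∧
    (∀ p : ℕ, p.Prime → ξ₁ < (p : ℝ) → (p : ℝ) ≤ ξ₂ → ¬ ((p : ℤ) ^ 2 ∣ MvPolynomial.eval x F)) ∧
    (∀ p : ℕ, p.Prime → (p : ℤ) ^ k ∣ MvPolynomial.eval x F → ξ₁ < (p : ℝ))}

-- N₃*(B)
def N3starCount {n : ℕ}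
    {τ : ∀ p : ℕ, p.Prime → ℕ}
    (𝓛 : ∀ (p : ℕ) (hp : p.Prime), Fin (τ p hp) → Fin n → @PadicInt p ⟨hp⟩)
    (Fstar : ∀ (p : ℕ) (hp : p.Prime), MvPolynomial (Fin n) (@PadicInt p ⟨hp⟩))
    (ξ₁ B : ℝ) : ℕ :=
  Set.ncard {x : Fin n → ℤ | (∀ i, |(x i : ℝ)| ≤ B) ∧
    ∃ (p : ℕ) (hp : p.Prime), ξ₁ < (p : ℝ) ∧
      Sp p hp (𝓛 p hp) (Fstar p hp) (fun i => ((x i : ZMod p)))}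

-- N₃†(B)
def N3dag {n : ℕ} (F : MvPolynomial (Fin n) ℤ)
    {τ : ∀ p : ℕ, p.Prime → ℕ}
    (𝓛 : ∀ (p : ℕ) (hp : p.Prime), Fin (τ p hp) → Fin n → @PadicInt p ⟨hp⟩)
    (Fstar : ∀ (p : ℕ) (hp : p.Prime), MvPolynomial (Fin n) (@PadicInt p ⟨hp⟩))
    (k : ℕ) (ξ₁ ξ₂ B : ℝ) : ℕ :=
  Set.ncard {x : Fin n → ℤ | (∀ i, |(x i : ℝ)| ≤ B) ∧
    ∃ (u : ℤ) (q : ℕ), q.Prime ∧ ξ₂ < (q : ℝ) ∧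
      MvPolynomial.eval x F = u * (q : ℤ) ^ k ∧
      (∀ p : ℕ, p.Prime → (p : ℝ) ≤ ξ₁ → ¬ ((p : ℤ) ^ k ∣ u)) ∧
      (∀ p : ℕ, p.Prime → ξ₁ < (p : ℝ) → (p : ℝ) ≤ ξ₂ → ¬ ((p : ℤ) ^ 2 ∣ u)) ∧
      (∀ (p : ℕ) (hp : p.Prime), (p : ℤ) ∣ u →
        ¬ Sp p hp (𝓛 p hp) (Fstar p hp) (fun i => ((x i : ZMod p))))}

-- ℛ_l : congruence classes mod l = u₁u₂D
def Rset {n : ℕ} (F : MvPolynomial (Fin n) ℤ)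
    {τ : ∀ p : ℕ, p.Prime → ℕ}
    (𝓛 : ∀ (p : ℕ) (hp : p.Prime), Fin (τ p hp) → Fin n → @PadicInt p ⟨hp⟩)
    (Fstar : ∀ (p : ℕ) (hp : p.Prime), MvPolynomial (Fin n) (@PadicInt p ⟨hp⟩))
    (k u₁ u₂ D : ℕ) : Set (Fin n → ZMod (u₁ * u₂ * D)) :=
  {m | ∃ a : Fin n → ℤ, (∀ i, ((a i : ZMod (u₁ * u₂ * D))) = m i) ∧
    (u₁ : ℤ) ∣ MvPolynomial.eval a F ∧ (u₂ : ℤ) ∣ MvPolynomial.eval a F ∧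
    (∃ s : ℕ, s < D ∧ (D : ℤ) ∣ (MvPolynomial.eval a F - (u₁ : ℤ) * u₂ * (s : ℤ) ^ k)) ∧
    ∀ (p : ℕ) (hp : p.Prime), p ∣ u₁ * u₂ →
      ¬ Sp p hp (𝓛 p hp) (Fstar p hp) (fun i => ((a i : ZMod p)))}

-- exponential sum E_ℛ(t; l)
def Esum {n l : ℕ} (R : Set (Fin n → ZMod l)) (t : Fin n → ℤ) : ℂ :=
  ∑ᶠ a ∈ R, Complex.exp (-(2 * Real.pi * Complex.I) *
    (∑ i, ((a i).val : ℂ) * (t i : ℂ)) / (l : ℂ))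

def Mplus {n : ℕ} (l : ℕ) (R : Set (Fin n → ZMod l)) (B : ℝ) : ℝ :=
  (3 * B) ^ n * R.ncard / (l : ℝ) ^ n

def Mpp {n : ℕ} (l : ℕ) (R : Set (Fin n → ZMod l)) (B : ℝ) : ℝ :=
  B ^ n / (l : ℝ) ^ n *
    ∑ᶠ t ∈ {t : Fin n → ℤ | t ≠ 0 ∧ ∀ i, |(t i : ℝ)| ≤ (l : ℝ) / B},
      ‖Esum R t‖

-- S(t; p)
def Ssum {n : ℕ} (p : ℕ) (hp : p.Prime) {τ : ℕ}
    (𝓛 : Fin τ → Fin n → @PadicInt p ⟨hp⟩) (t : Fin n → ℤ) : ℂ :=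
  ∑ i : Fin τ,
    ∑ᶠ a ∈ {a : Fin n → ZMod p | (∑ m, (@PadicInt.toZMod p ⟨hp⟩) (𝓛 i m) * a m) = 0},
      Complex.exp ((2 * Real.pi * Complex.I) *
        (∑ m, ((a m).val : ℂ) * (t m : ℂ)) / (p : ℂ))

-- |S(t; l)| for squarefree l
def SabsSF {n : ℕ} {τ : ∀ p : ℕ, p.Prime → ℕ}
    (𝓛 : ∀ (p : ℕ) (hp : p.Prime), Fin (τ p hp) → Fin n → @PadicInt p ⟨hp⟩)
    (l : ℕ) (t : Fin n → ℤ) : ℝ :=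
  ∏ p ∈ l.primeFactors.attach,
    ‖Ssum p.1 (Nat.prime_of_mem_primeFactors p.2)
      (𝓛 p.1 (Nat.prime_of_mem_primeFactors p.2)) t‖

-- admissible u₂'s
def U2set (ξ₁ ξ₂ ξ₃ : ℝ) : Set ℕ :=
  {u | 0 < u ∧ (u : ℝ) ≤ ξ₃ ∧ Squarefree u ∧
    ∀ p ∈ u.primeFactors, ξ₁ < (p : ℝ) ∧ (p : ℝ) ≤ ξ₂}


-- extra defs for theorems

/-- `N₄(B)` from Lemma N4B. -/
def N4sum {n : ℕ} (F : MvPolynomial (Fin n) ℤ)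
    {τ : ∀ p : ℕ, p.Prime → ℕ}
    (𝓛 : ∀ (p : ℕ) (hp : p.Prime), Fin (τ p hp) → Fin n → @PadicInt p ⟨hp⟩)
    (Fstar : ∀ (p : ℕ) (hp : p.Prime), MvPolynomial (Fin n) (@PadicInt p ⟨hp⟩))
    (k : ℕ) (C₁ : ℝ) (ξ₁ : ℝ → ℝ) (B : ℝ) : ℝ :=
  ∑ᶠ u₁ ∈ {u₁ : ℕ | u₁ ∣ Cxi k (ξ₁ B)},
    ∑ᶠ u₂ ∈ U2set (ξ₁ B) (xi2 n B) (xi3 C₁ k B),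
      Mplus (u₁ * u₂ * scrD k (ξ₁ B) B u₂)
        (Rset F 𝓛 Fstar k u₁ u₂ (scrD k (ξ₁ B) B u₂)) B /
        (k : ℝ) ^ (scrD k (ξ₁ B) B u₂).primeFactors.card

/-- the inner truncated sum `Σ'_{|tᵢ|≤Y} |S(t;u₂)|`. -/
def Ssumbox {n : ℕ} {τ : ∀ p : ℕ, p.Prime → ℕ}
    (𝓛 : ∀ (p : ℕ) (hp : p.Prime), Fin (τ p hp) → Fin n → @PadicInt p ⟨hp⟩)
    (u₂ : ℕ) (Y : ℝ) : ℝ :=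
  ∑ᶠ t ∈ {t : Fin n → ℤ | t ≠ 0 ∧ ∀ i, |(t i : ℝ)| ≤ Y}, SabsSF 𝓛 u₂ t

/-- `Q` restricted to a set of `u₂`'s. -/
def QUgen {n : ℕ} {τ : ∀ p : ℕ, p.Prime → ℕ}
    (𝓛 : ∀ (p : ℕ) (hp : p.Prime), Fin (τ p hp) → Fin n → @PadicInt p ⟨hp⟩)
    (S : Set ℕ) (B : ℝ) : ℝ :=
  ∑ᶠ u₂ ∈ S, (1 / (u₂ : ℝ) ^ n) *
    Ssumbox 𝓛 u₂ ((u₂ : ℝ) ^ ((9 : ℝ) / 10) / B ^ ((4 : ℝ) / 5))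

/-- `l* = ∏_{p ≤ Ξ, p | u₂} p`. -/
def lstar (u₂ : ℕ) (Ξ : ℝ) : ℕ :=
  ∏ᶠ p ∈ {p : ℕ | p.Prime ∧ p ∣ u₂ ∧ (p : ℝ) ≤ Ξ}, p

/-!
By orthogonality of characters, the sum of `e(a ⬝ᵥ t / p)` over the points `a` of a hyperplane
`c ⬝ᵥ a = 0` of `𝔽_pⁿ` vanishes unless `t` is proportional to `c` modulo `p`. Hence `|S(t; u)|` is
at most `u ^ (n - 1)` times the number of ways to choose, for every `p ∣ u`, a linear factor of `F`
over `ℤ_p` proportional to `t` modulo `p`.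

Fix such a choice. For large `B` every `p ∣ u` is so large that the choice and two coordinates of
`t` determine `t` modulo `u`, hence `t` itself since `|t| < u / 2`. The integral vector of the same
coordinate plane orthogonal to `t` is a zero of `F` modulo `u`. Now `F` is anisotropic over `ℚ`:
otherwise the product of the linear factors vanishing at a rational zero `v`, which is up to a
scalar the leading coefficient of `F (x + s v)` in `s`, would be a proper rational factor of the
irreducible form `F`. So `u` divides a *non-zero* integer of size `O(Y ^ d)`, where `|t| ≤ Y`. After
exchanging the sums over `u` and over the `O(Y ^ 2)` pairs of coordinates, the divisor bound
`D ^ ω(m) ≪ m ^ ε` gives a total of `O(Y ^ (2 + ε))`.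
-/

/-! ### Decomposable forms -/

section Decomposable

variable {R S : Type*} [CommRing R] [CommRing S] {n : ℕ}

theorem linForm_isHomogeneous (c : Fin n → R) : (linForm c).IsHomogeneous 1 :=
  IsHomogeneous.sum _ _ _ fun i _ => by
    simpa using (isHomogeneous_C (Fin n) (c i)).mul (isHomogeneous_X R i)

theorem eval_linForm (v c : Fin n → R) : eval v (linForm c) = c ⬝ᵥ v := by
  simp [linForm, dotProduct]

theorem map_linForm (f : R →+* S) (c : Fin n → R) : (linForm c).map f = linForm (f ∘ c) := by
  simp [linForm]

theorem not_isUnit_linForm [Nontrivial R] (c : Fin n → R) : ¬IsUnit (linForm c) := fun h =>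
  not_isUnit_zero (M₀ := R) <| by
    simpa [eval_linForm, -eval_zero] using h.map (eval (0 : Fin n → R))

theorem le_totalDegree_of_prod_linForm_dvd [IsDomain R] {d : ℕ} {F : MvPolynomial (Fin n) R}
    (hF : F ≠ 0) {L : Fin d → Fin n → R} (h : ∏ j, linForm (L j) ∣ F) : d ≤ F.totalDegree := by
  have hdeg : (∏ j, linForm (L j)).totalDegree = d := by
    simpa using (IsHomogeneous.prod Finset.univ _ (fun _ => 1)
      fun j _ => linForm_isHomogeneous (L j)).totalDegree (ne_zero_of_dvd_ne_zero hF h)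
  exact hdeg ▸ totalDegree_le_of_dvd_of_isDomain h hF

theorem dvd_of_map_dvd_map {σ k K : Type*} [Field k] [CommRing K] [Nontrivial K] [Algebra k K]
    {G F : MvPolynomial σ k} (h : G.map (algebraMap k K) ∣ F.map (algebraMap k K)) : G ∣ F := by
  let _ : Algebra (MvPolynomial σ k) (MvPolynomial σ K) := algebraMvPolynomial
  have : Module.Free (MvPolynomial σ k) (MvPolynomial σ K) :=
    .of_equiv (Algebra.IsPushout.equiv k (MvPolynomial σ k) K (MvPolynomial σ K)).toLinearEquiv
  rw [← Ideal.mem_span_singleton,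
    ← Ideal.comap_map_eq_self_of_faithfullyFlat (B := MvPolynomial σ K) (Ideal.span {G}),
    Ideal.mem_comap, Ideal.map_span, Set.image_singleton, Ideal.mem_span_singleton]
  exact h

/-- The polynomial `F(x + s v)` in the variable `s`, with coefficients in the polynomial ring
in `x`. Its leading coefficient isolates the linear factors of `F` that vanish at `v`. -/
def translateAlong (v : Fin n → R) :
    MvPolynomial (Fin n) R →ₐ[R] Polynomial (MvPolynomial (Fin n) R) :=
  aeval fun i => Polynomial.C (X i) + Polynomial.C (C (v i)) * Polynomial.X

theorem map_translateAlong (f : R →+* S) (v : Fin n → R) (F : MvPolynomial (Fin n) R) :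
    (translateAlong v F).map (MvPolynomial.map f) = translateAlong (f ∘ v) (F.map f) := by
  induction F using MvPolynomial.induction_on with
  | C a => simp [translateAlong, MvPolynomial.algebraMap_eq]
  | add p q hp hq => simp [hp, hq]
  | mul_X p i hp => rw [map_mul, Polynomial.map_mul, hp]; simp [translateAlong]

theorem translateAlong_linForm (v c : Fin n → R) :
    translateAlong v (linForm c) =
      Polynomial.C (linForm c) + Polynomial.C (C (c ⬝ᵥ v)) * Polynomial.X := by
  simp [translateAlong, linForm, dotProduct, mul_add, Finset.sum_add_distrib, Finset.sum_mul,
    mul_assoc, MvPolynomial.algebraMap_eq]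

theorem leadingCoeff_translateAlong_linForm (v c : Fin n → R) [Decidable (c ⬝ᵥ v = 0)] :
    (translateAlong v (linForm c)).leadingCoeff =
      if c ⬝ᵥ v = 0 then linForm c else C (c ⬝ᵥ v) := by
  rw [translateAlong_linForm]
  split_ifs with h
  · simp [h]
  · rw [add_comm, Polynomial.leadingCoeff_linear (by simpa using h)]

theorem map_leadingCoeff_translateAlong [IsDomain S] {d : ℕ} {f : R →+* S}
    (hf : Function.Injective f) {F : MvPolynomial (Fin n) R} {L : Fin d → Fin n → S}
    (hL : F.map f = ∏ j, linForm (L j)) (v : Fin n → R)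
    [DecidablePred fun j => L j ⬝ᵥ (f ∘ v) = 0] :
    (translateAlong v F).leadingCoeff.map f =
      (∏ j with L j ⬝ᵥ (f ∘ v) = 0, linForm (L j)) *
        C (∏ j with ¬L j ⬝ᵥ (f ∘ v) = 0, L j ⬝ᵥ (f ∘ v)) := by
  rw [← Polynomial.leadingCoeff_map_of_injective (map_injective f hf), map_translateAlong, hL,
    map_prod, Polynomial.leadingCoeff_prod]
  simp only [leadingCoeff_translateAlong_linForm, Finset.prod_ite, map_prod]

theorem dotProduct_eq_zero_of_irreducible {k K : Type*} [Field k] [Field K] [Algebra k K] {d : ℕ}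
    {F : MvPolynomial (Fin n) k} (hF : Irreducible F) {L : Fin d → Fin n → K}
    (hL : F.map (algebraMap k K) = ∏ j, linForm (L j)) {v : Fin n → k} {j₀ : Fin d}
    (h₀ : L j₀ ⬝ᵥ (algebraMap k K ∘ v) = 0) (j : Fin d) :
    L j ⬝ᵥ (algebraMap k K ∘ v) = 0 := by
  classical
  set w := algebraMap k K ∘ v
  set P := ∏ j with L j ⬝ᵥ w = 0, linForm (L j) with hP
  set Q := ∏ j with ¬L j ⬝ᵥ w = 0, linForm (L j) with hQ
  set G := (translateAlong v F).leadingCoeff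
  set q := ∏ j with ¬L j ⬝ᵥ w = 0, L j ⬝ᵥ w
  have hPQ : F.map (algebraMap k K) = P * Q := by
    rw [hL, hP, hQ, Finset.prod_filter_mul_prod_filter_not]
  have hP₀ : P ≠ 0 := fun h => hF.ne_zero <| map_injective _ (algebraMap k K).injective <| by
    rw [hPQ, h, zero_mul, map_zero]
  have hGP : G.map (algebraMap k K) = P * C q :=
    map_leadingCoeff_translateAlong (algebraMap k K).injective hL v
  have hCq : IsUnit (C q : MvPolynomial (Fin n) K) :=
    (IsUnit.mk0 q <| Finset.prod_ne_zero_iff.mpr fun j hj => (Finset.mem_filter.mp hj).2).map C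
  have hGv : eval v G = 0 := (algebraMap k K).injective <| by
    rw [MvPolynomial.map_eval, hGP, map_mul, hP, map_prod, map_zero,
      Finset.prod_eq_zero (i := j₀) (by simpa using h₀) (by rw [eval_linForm, h₀]), zero_mul]
  obtain ⟨H, hGH⟩ : G ∣ F := dvd_of_map_dvd_map (K := K) <| by
    rw [hGP, hPQ]
    exact mul_dvd_mul_left P hCq.dvd
  have hG : ¬IsUnit G := fun h => not_isUnit_zero (hGv ▸ h.map (eval v))
  have hQ_unit : IsUnit Q := by
    have : Q = C q * H.map (algebraMap k K) := mul_left_cancel₀ hP₀ <| by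
      rw [← hPQ, hGH, map_mul, hGP, mul_assoc]
    rw [this]
    exact hCq.mul (((hF.isUnit_or_isUnit hGH).resolve_left hG).map _)
  by_contra hj
  exact not_isUnit_linForm (L j) <| isUnit_of_dvd_unit
    (Finset.dvd_prod_of_mem (fun j => linForm (L j)) (by simpa using hj)) hQ_unit

theorem det_ne_zero_of_discProd_ne_zero {d : ℕ} {L : Fin d → Fin n → ℂ} (hΔ : discProd L ≠ 0)
    {g : Fin n → Fin d} (hg : StrictMono g) : (Matrix.of fun i => L (g i)).det ≠ 0 := by
  rw [discProd, finprod_mem_eq_finite_toFinset_prod _ (Set.toFinite _),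
    Finset.prod_ne_zero_iff] at hΔ
  exact norm_ne_zero_iff.mp (hΔ g (by simpa using hg))

theorem eval_ne_zero_of_irreducible {d : ℕ} (hd : n ≤ d) {F : MvPolynomial (Fin n) ℤ}
    {L : Fin d → Fin n → ℂ} (hL : F.map (Int.castRingHom ℂ) = ∏ j, linForm (L j))
    (hF : Irreducible (F.map (Int.castRingHom ℚ))) (hΔ : discProd L ≠ 0) {v : Fin n → ℤ}
    (hv : v ≠ 0) : eval v F ≠ 0 := by
  intro h
  have hw : algebraMap ℚ ℂ ∘ Int.castRingHom ℚ ∘ v = Int.castRingHom ℂ ∘ v := by ext; simp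
  have hprod : ∏ j, L j ⬝ᵥ (Int.castRingHom ℂ ∘ v) = 0 := by
    simp_rw [← eval_linForm]
    rw [← map_prod, ← hL, ← MvPolynomial.map_eval, h, map_zero]
  obtain ⟨j₀, -, hj₀⟩ := Finset.prod_eq_zero_iff.mp hprod
  have hall (j : Fin d) : L j ⬝ᵥ (Int.castRingHom ℂ ∘ v) = 0 := by
    rw [← hw] at hj₀ ⊢
    refine dotProduct_eq_zero_of_irreducible hF ?_ hj₀ j
    rw [MvPolynomial.map_map, ← hL]
    congr 2
  have hw₀ := Matrix.eq_zero_of_mulVec_eq_zero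
    (det_ne_zero_of_discProd_ne_zero hΔ (Fin.strictMono_castLE hd)) (funext fun i => hall _)
  exact hv (funext fun i => by simpa using congrFun hw₀ i)

end Decomposable

/-! ### Exponential sums over hyperplanes -/

/-- Proportionality of two vectors, expressed by the vanishing of their `2 × 2` minors. In
particular `0` is proportional to every vector. -/
def Proportional {ι R : Type*} [Mul R] (c t : ι → R) : Prop :=
  ∀ i j, c i * t j = c j * t i

theorem sum_stdAddChar_submodule {N : ℕ} [NeZero N] {V : Type*} [AddCommGroup V] [Module (ZMod N) V]
    (W : Submodule (ZMod N) V) [Fintype W] (s : Module.Dual (ZMod N) V) [Decidable (W ≤ s.ker)] :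
    ∑ a : W, ZMod.stdAddChar (s a) = if W ≤ s.ker then (Fintype.card W : ℂ) else 0 := by
  classical
  let ψ : AddChar W ℂ :=
    ZMod.stdAddChar.compAddMonoidHom (s.toAddMonoidHom.comp W.subtype.toAddMonoidHom)
  have hψ : ψ = 0 ↔ W ≤ s.ker := by
    rw [AddChar.eq_zero_iff]
    refine ⟨fun h a ha => ?_, fun h a => ?_⟩
    · exact ZMod.injective_stdAddChar ((h ⟨a, ha⟩).trans (AddChar.map_zero_eq_one _).symm)
    · change ZMod.stdAddChar (s a) = 1
      rw [LinearMap.mem_ker.mp (h a.2), AddChar.map_zero_eq_one]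
  calc ∑ a : W, ZMod.stdAddChar (s a) = ∑ a, ψ a := rfl
    _ = _ := by rw [AddChar.sum_eq_ite]; simp only [hψ]

theorem card_ker_dual {k V : Type*} [Field k] [AddCommGroup V] [Module k V] [Module.Finite k V]
    {f : Module.Dual k V} (hf : f ≠ 0) :
    Nat.card f.ker = Nat.card k ^ (Module.finrank k V - 1) := by
  rw [Module.natCard_eq_pow_finrank (K := k), ← Module.Dual.finrank_ker_add_one_of_ne_zero hf,
    Nat.add_sub_cancel]

theorem proportional_of_ker_le {ι k : Type*} [Fintype ι] [DecidableEq ι] [CommRing k]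
    {c t : ι → k} (h : (dotProductEquiv k ι c).ker ≤ (dotProductEquiv k ι t).ker) :
    Proportional c t := fun i j => by
  have hmem : Pi.single j (c i) - Pi.single i (c j) ∈ (dotProductEquiv k ι c).ker := by
    simp [mul_comm]
  simpa [sub_eq_zero, mul_comm] using h hmem

theorem cexp_eq_stdAddChar {N n : ℕ} [NeZero N] (a : Fin n → ZMod N) (t : Fin n → ℤ) :
    Complex.exp (2 * Real.pi * Complex.I * (∑ m, ((a m).val : ℂ) * (t m : ℂ)) / (N : ℂ)) =
      ZMod.stdAddChar ((Int.cast ∘ t) ⬝ᵥ a) := by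
  have hcast : (Int.cast ∘ t) ⬝ᵥ a = ((∑ m, (a m).val * t m : ℤ) : ZMod N) := by
    simp [dotProduct, mul_comm]
  rw [hcast, ZMod.stdAddChar_coe]
  push_cast
  rfl

section Prime

variable {p n : ℕ} [Fact p.Prime]

theorem norm_finsum_hyperplane_le {c : Fin n → ZMod p} (hc : c ≠ 0) (t : Fin n → ℤ)
    [Decidable (Proportional c (Int.cast ∘ t))] :
    ‖∑ᶠ a ∈ {a : Fin n → ZMod p | c ⬝ᵥ a = 0},
        Complex.exp (2 * Real.pi * Complex.I * (∑ m, ((a m).val : ℂ) * (t m : ℂ)) / (p : ℂ))‖ ≤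
      if Proportional c (Int.cast ∘ t) then (p : ℝ) ^ (n - 1) else 0 := by
  classical
  set s := dotProductEquiv (ZMod p) (Fin n) (Int.cast ∘ t)
  set W := (dotProductEquiv (ZMod p) (Fin n) c).ker
  have hsum : ∑ᶠ a ∈ {a : Fin n → ZMod p | c ⬝ᵥ a = 0},
      Complex.exp (2 * Real.pi * Complex.I * (∑ m, ((a m).val : ℂ) * (t m : ℂ)) / (p : ℂ)) =
        ∑ a : W, ZMod.stdAddChar (s a) := by
    simp only [cexp_eq_stdAddChar]
    rw [← finsum_eq_sum_of_fintype]
    exact (finsum_set_coe_eq_finsum_mem (W : Set (Fin n → ZMod p))).symm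
  have hcard : Fintype.card W = p ^ (n - 1) := by
    rw [← Nat.card_eq_fintype_card, card_ker_dual (by simpa using hc)]
    simp
  rw [hsum, sum_stdAddChar_submodule, hcard]
  split_ifs with hW ht ht
  · simp
  · exact absurd (proportional_of_ker_le hW) ht
  · simp
  · simp

theorem eq_of_proportional {c : Fin n → ZMod p} {i₀ : Fin n} (hc : c i₀ ≠ 0)
    {t t' : Fin n → ZMod p} (ht : Proportional c t) (ht' : Proportional c t')
    (h : t i₀ = t' i₀) : t = t' :=
  funext fun j => mul_left_cancel₀ hc (by rw [ht i₀ j, ht' i₀ j, h])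

end Prime

/-- The reduction modulo `p` of a coefficient vector over `ℤ_p`. -/
def residue {n p : ℕ} (hp : p.Prime) (c : Fin n → @PadicInt p ⟨hp⟩) : Fin n → ZMod p :=
  @PadicInt.toZMod p ⟨hp⟩ ∘ c

section Residue

variable {n p : ℕ} {hp : p.Prime}

open Classical in
theorem norm_Ssum_le {τ : ℕ} {𝓛 : Fin τ → Fin n → @PadicInt p ⟨hp⟩}
    (h𝓛 : ∀ i, residue hp (𝓛 i) ≠ 0) (t : Fin n → ℤ) :
    ‖Ssum p hp 𝓛 t‖ ≤
      (p : ℝ) ^ (n - 1) * Finset.card {i | Proportional (residue hp (𝓛 i)) (Int.cast ∘ t)} := by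
  have : Fact p.Prime := ⟨hp⟩
  calc ‖Ssum p hp 𝓛 t‖
      ≤ ∑ i, if Proportional (residue hp (𝓛 i)) (Int.cast ∘ t) then (p : ℝ) ^ (n - 1) else 0 :=
        (norm_sum_le _ _).trans <| Finset.sum_le_sum fun i _ => norm_finsum_hyperplane_le (h𝓛 i) t
    _ = _ := by rw [← Finset.sum_filter, Finset.sum_const, nsmul_eq_mul, mul_comm]

theorem dvd_eval_of_linForm_dvd {F : MvPolynomial (Fin n) ℤ} {c : Fin n → @PadicInt p ⟨hp⟩}
    (hc : linForm c ∣ F.map (Int.castRingHom (@PadicInt p ⟨hp⟩))) {v : Fin n → ℤ}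
    (hv : residue hp c ⬝ᵥ (Int.cast ∘ v) = 0) : (p : ℤ) ∣ eval v F := by
  have : Fact p.Prime := ⟨hp⟩
  have h := map_dvd (eval (Int.castRingHom (ZMod p) ∘ v))
    (map_dvd (MvPolynomial.map (PadicInt.toZMod (p := p))) hc)
  rw [MvPolynomial.map_map, RingHom.eq_intCast' (RingHom.comp _ _), ← MvPolynomial.map_eval,
    map_linForm, eval_linForm] at h
  rw [← ZMod.intCast_zmod_eq_zero_iff_dvd]
  exact zero_dvd_iff.mp (hv ▸ h)

theorem residue_apply_ne_zero {F : MvPolynomial (Fin n) ℤ} {c : Fin n → @PadicInt p ⟨hp⟩}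
    (hc : linForm c ∣ F.map (Int.castRingHom (@PadicInt p ⟨hp⟩))) {i : Fin n}
    (hF : ¬(p : ℤ) ∣ eval (Pi.single i 1) F) : residue hp c i ≠ 0 := fun h =>
  hF <| dvd_eval_of_linForm_dvd hc <| by
    simpa [dotProduct, Pi.single_apply] using h

end Residue

/-! ### Counting frequencies -/

/-- The integers of absolute value at most `Y`. -/
def intBox (Y : ℝ) : Finset ℤ :=
  Finset.Icc (-⌊Y⌋) ⌊Y⌋

theorem mem_intBox {Y : ℝ} {x : ℤ} : x ∈ intBox Y ↔ |(x : ℝ)| ≤ Y := by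
  rw [intBox, Finset.mem_Icc, ← abs_le, Int.le_floor, Int.cast_abs]

theorem card_intBox_le {Y : ℝ} (hY : 1 ≤ Y) : ((intBox Y).card : ℝ) ≤ 3 * Y := by
  have hfloor : (1 : ℤ) ≤ ⌊Y⌋ := Int.le_floor.mpr (by simpa using hY)
  have hcard : ((intBox Y).card : ℤ) = 2 * ⌊Y⌋ + 1 := by
    rw [intBox, Int.card_Icc, Int.toNat_of_nonneg (by linarith)]
    ring
  have hcard' : ((intBox Y).card : ℝ) = 2 * (⌊Y⌋ : ℝ) + 1 := by exact_mod_cast hcard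
  linarith [Int.floor_le Y]

/-- The non-zero integral points of the cube `[-Y, Y]^ι`. -/
def nonzeroBox (ι : Type*) [Fintype ι] [DecidableEq ι] (Y : ℝ) : Finset (ι → ℤ) :=
  {t ∈ Fintype.piFinset fun _ => intBox Y | t ≠ 0}

section NonzeroBox

variable {ι : Type*} [Fintype ι] [DecidableEq ι] {Y : ℝ}

theorem mem_nonzeroBox {t : ι → ℤ} : t ∈ nonzeroBox ι Y ↔ t ≠ 0 ∧ ∀ i, |(t i : ℝ)| ≤ Y := by
  simp [nonzeroBox, mem_intBox, and_comm]

theorem card_nonzeroBox_le (hY : 1 ≤ Y) :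
    ((nonzeroBox ι Y).card : ℝ) ≤ (3 * Y) ^ Fintype.card ι := by
  have h : (nonzeroBox ι Y).card ≤ (intBox Y).card ^ Fintype.card ι :=
    (Finset.card_filter_le _ _).trans_eq (by simp [Fintype.card_piFinset])
  calc ((nonzeroBox ι Y).card : ℝ) ≤ ((intBox Y).card : ℝ) ^ Fintype.card ι := by exact_mod_cast h
    _ ≤ _ := by gcongr; exact card_intBox_le hY

theorem nonzeroBox_mono {Y' : ℝ} (h : Y ≤ Y') : nonzeroBox ι Y ⊆ nonzeroBox ι Y' := fun _ ht =>
  mem_nonzeroBox.mpr ⟨(mem_nonzeroBox.mp ht).1, fun i => ((mem_nonzeroBox.mp ht).2 i).trans h⟩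

theorem nonzeroBox_eq_empty (hY : Y < 1) : nonzeroBox ι Y = ∅ := by
  refine Finset.eq_empty_of_forall_notMem fun t ht => (mem_nonzeroBox.mp ht).1 <| funext fun i => ?_
  have h : |(t i : ℝ)| < 1 := ((mem_nonzeroBox.mp ht).2 i).trans_lt hY
  exact Int.abs_lt_one_iff.mp (by exact_mod_cast h)

end NonzeroBox

theorem intCast_dvd_of_forall_primeFactors {u : ℕ} (hu : Squarefree u) {x : ℤ}
    (h : ∀ p ∈ u.primeFactors, (p : ℤ) ∣ x) : (u : ℤ) ∣ x := by
  rw [Int.natCast_dvd, ← Nat.prod_primeFactors_of_squarefree hu]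
  exact Finset.prod_primes_dvd _ (fun p hp => (Nat.prime_of_mem_primeFactors hp).prime)
    fun p hp => Int.natCast_dvd.mp (h p hp)

/-- The value of `F` at the vector supported on the coordinates `i 0`, `i 1` and orthogonal there
to `q`. If `q` collects these coordinates of a vector proportional modulo `p` to a linear factor
of `F`, then `p` divides this value. -/
def crossValue {n : ℕ} (F : MvPolynomial (Fin n) ℤ) (i : Fin 2 → Fin n) (q : Fin 2 → ℤ) : ℤ :=
  eval (Pi.single (i 0) (q 1) - Pi.single (i 1) (q 0)) F

/-- The non-zero `q ∈ [-Y, Y]²` for which `u` divides `crossValue F i q`. -/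
def crossRoots {n : ℕ} (F : MvPolynomial (Fin n) ℤ) (i : Fin 2 → Fin n) (Y : ℝ) (u : ℕ) :
    Finset (Fin 2 → ℤ) :=
  {q ∈ nonzeroBox (Fin 2) Y | (u : ℤ) ∣ crossValue F i q}

section CrossValue

variable {n : ℕ} {F : MvPolynomial (Fin n) ℤ} {i : Fin 2 → Fin n}

theorem crossValue_ne_zero (hF : ∀ v : Fin n → ℤ, v ≠ 0 → eval v F ≠ 0)
    (hi : Function.Injective i) {q : Fin 2 → ℤ} (hq : q ≠ 0) : crossValue F i q ≠ 0 := by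
  have hi₀₁ : i 0 ≠ i 1 := hi.ne Fin.zero_ne_one
  refine hF _ fun h => hq ?_
  have h₀ : q 1 = 0 := by simpa [hi₀₁] using congrFun h (i 0)
  have h₁ : q 0 = 0 := by simpa [hi₀₁.symm] using congrFun h (i 1)
  ext j
  fin_cases j <;> assumption

theorem dvd_crossValue_of_proportional {p : ℕ} {hp : p.Prime} {c : Fin n → @PadicInt p ⟨hp⟩}
    (hc : linForm c ∣ F.map (Int.castRingHom (@PadicInt p ⟨hp⟩))) {t : Fin n → ℤ}
    (h : Proportional (residue hp c) (Int.cast ∘ t)) : (p : ℤ) ∣ crossValue F i (t ∘ i) := by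
  refine dvd_eval_of_linForm_dvd (hp := hp) hc ?_
  have := h (i 0) (i 1)
  simpa [dotProduct, Pi.single_apply, mul_sub, sub_eq_zero] using this

theorem crossRoots_mono {Y Y' : ℝ} (h : Y ≤ Y') (u : ℕ) :
    crossRoots F i Y u ⊆ crossRoots F i Y' u :=
  Finset.filter_subset_filter _ (nonzeroBox_mono h)

variable {u : ℕ} {Y : ℝ} {c : ∀ p : u.primeFactors, Fin n → ZMod p}

theorem eq_of_forall_proportional (hu : Squarefree u) {j : Fin n} (hc : ∀ p, c p j ≠ 0)
    (hY : 2 * Y < u) {t t' : Fin n → ℤ} (ht : ∀ m, |(t m : ℝ)| ≤ Y) (ht' : ∀ m, |(t' m : ℝ)| ≤ Y)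
    (h : ∀ p, Proportional (c p) (Int.cast ∘ t)) (h' : ∀ p, Proportional (c p) (Int.cast ∘ t'))
    (hj : t j = t' j) : t = t' := by
  refine funext fun m => sub_eq_zero.mp <| Int.eq_zero_of_abs_lt_dvd (m := u) ?_ ?_
  · refine intCast_dvd_of_forall_primeFactors hu fun p hp => ?_
    have : Fact p.Prime := ⟨Nat.prime_of_mem_primeFactors hp⟩
    have heq : (Int.cast ∘ t : Fin n → ZMod p) = Int.cast ∘ t' :=
      eq_of_proportional (hc ⟨p, hp⟩) (h ⟨p, hp⟩) (h' ⟨p, hp⟩) (by simp [hj])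
    rw [← ZMod.intCast_zmod_eq_zero_iff_dvd, Int.cast_sub, sub_eq_zero]
    exact congrFun heq m
  · have hlt : |(t m : ℝ) - t' m| < u := by linarith [abs_sub (t m : ℝ) (t' m), ht m, ht' m]
    exact_mod_cast hlt

open Classical in
theorem card_proportional_le_card_crossRoots (hu : Squarefree u) (hc : ∀ p, c p (i 0) ≠ 0)
    (hF : ∀ p t, Proportional (c p) (Int.cast ∘ t) → (p : ℤ) ∣ crossValue F i (t ∘ i))
    (hY : 2 * Y < u) :
    Finset.card {t ∈ nonzeroBox (Fin n) Y | ∀ p, Proportional (c p) (Int.cast ∘ t)} ≤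
      (crossRoots F i Y u).card := by
  refine Finset.card_le_card_of_injOn (fun t => t ∘ i) (fun t ht => ?_) fun t ht t' ht' htt' => ?_
  · obtain ⟨htY, hprop⟩ := Finset.mem_filter.mp ht
    obtain ⟨ht₀, hbox⟩ := mem_nonzeroBox.mp htY
    refine Finset.mem_filter.mpr ⟨mem_nonzeroBox.mpr ⟨fun h => ht₀ ?_, fun j => hbox (i j)⟩, ?_⟩
    · exact eq_of_forall_proportional hu hc hY hbox
        (by simpa using fun _ => (abs_nonneg _).trans (hbox (i 0))) hprop
        (by simp [Proportional]) (congrFun h 0)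
    · exact intCast_dvd_of_forall_primeFactors hu fun p hp => hF ⟨p, hp⟩ t (hprop ⟨p, hp⟩)
  · obtain ⟨htY, hprop⟩ := Finset.mem_filter.mp ht
    obtain ⟨htY', hprop'⟩ := Finset.mem_filter.mp ht'
    exact eq_of_forall_proportional hu hc hY (mem_nonzeroBox.mp htY).2 (mem_nonzeroBox.mp htY').2
      hprop hprop' (congrFun htt' 0)

end CrossValue

/-- A choice, for each prime divisor `p` of `u`, of one of the `τ p` linear factors over `ℤ_p`. -/
abbrev FactorChoice (τ : ∀ p : ℕ, p.Prime → ℕ) (u : ℕ) : Type :=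
  ∀ p : u.primeFactors, Fin (τ p (Nat.prime_of_mem_primeFactors p.2))

section FactorChoice

variable {n u : ℕ} {τ : ∀ p : ℕ, p.Prime → ℕ}

theorem card_factorChoice_le {D : ℕ} (hτ : ∀ p hp, τ p hp ≤ D) :
    Fintype.card (FactorChoice τ u) ≤ D ^ u.primeFactors.card := by
  rw [Fintype.card_pi]
  simp only [Fintype.card_fin]
  exact (Finset.prod_le_pow_card _ _ _ fun p _ => hτ _ _).trans_eq (by simp)

/-- The coefficient vectors modulo `p`, for `p ∣ u`, of the linear factors selected by `f`. -/
def choiceResidue (𝓛 : ∀ (p : ℕ) (hp : p.Prime), Fin (τ p hp) → Fin n → @PadicInt p ⟨hp⟩)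
    (f : FactorChoice τ u) (p : u.primeFactors) : Fin n → ZMod p :=
  residue (Nat.prime_of_mem_primeFactors p.2) (𝓛 p _ (f p))

variable {𝓛 : ∀ (p : ℕ) (hp : p.Prime), Fin (τ p hp) → Fin n → @PadicInt p ⟨hp⟩}

open Classical in
theorem SabsSF_le (hu : Squarefree u)
    (h𝓛 : ∀ p hp, p ∈ u.primeFactors → ∀ i, residue hp (𝓛 p hp i) ≠ 0) (t : Fin n → ℤ) :
    SabsSF 𝓛 u t ≤ (u : ℝ) ^ (n - 1) * Finset.card
      {f : FactorChoice τ u | ∀ p, Proportional (choiceResidue 𝓛 f p) (Int.cast ∘ t)} := by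
  have hprod : ∏ p ∈ u.primeFactors.attach, (p : ℝ) = u := by
    rw [Finset.prod_attach u.primeFactors fun p : ℕ => (p : ℝ), ← Nat.cast_prod,
      Nat.prod_primeFactors_of_squarefree hu]
  have hfilter :
      ({f : FactorChoice τ u | ∀ p, Proportional (choiceResidue 𝓛 f p) (Int.cast ∘ t)} : Finset _) =
        Fintype.piFinset fun p : u.primeFactors => {i | Proportional
          (residue (Nat.prime_of_mem_primeFactors p.2) (𝓛 p _ i)) (Int.cast ∘ t)} := by
    ext f
    simp [choiceResidue]
  rw [hfilter, Fintype.card_piFinset, Finset.univ_eq_attach, Nat.cast_prod, ← hprod,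
    ← Finset.prod_pow, ← Finset.prod_mul_distrib]
  exact Finset.prod_le_prod (fun _ _ => norm_nonneg _) fun p _ => norm_Ssum_le (h𝓛 p _ p.2) t

theorem Ssumbox_eq_sum (u : ℕ) (Y : ℝ) :
    Ssumbox 𝓛 u Y = ∑ t ∈ nonzeroBox (Fin n) Y, SabsSF 𝓛 u t := by
  rw [Ssumbox, ← finsum_mem_coe_finset]
  congr! 3
  exact mem_nonzeroBox.symm

theorem Ssumbox_le {F : MvPolynomial (Fin n) ℤ} {i : Fin 2 → Fin n} {D : ℕ}
    (hτ : ∀ p hp, τ p hp ≤ D)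
    (h𝓛 : ∀ p hp j, linForm (𝓛 p hp j) ∣ F.map (Int.castRingHom (@PadicInt p ⟨hp⟩)))
    (hu : Squarefree u) (hF : ∀ p ∈ u.primeFactors, ¬(p : ℤ) ∣ eval (Pi.single (i 0) 1) F)
    {Y : ℝ} (hY : 2 * Y < u) :
    Ssumbox 𝓛 u Y ≤
      (u : ℝ) ^ (n - 1) * (D ^ u.primeFactors.card * (crossRoots F i Y u).card : ℕ) := by
  classical
  have hres : ∀ p hp, p ∈ u.primeFactors → ∀ j, residue hp (𝓛 p hp j) (i 0) ≠ 0 :=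
    fun p hp hpu j => residue_apply_ne_zero (h𝓛 p hp j) (hF p hpu)
  let P (t : Fin n → ℤ) (f : FactorChoice τ u) : Prop :=
    ∀ p, Proportional (choiceResidue 𝓛 f p) (Int.cast ∘ t)
  have hcount : ∑ t ∈ nonzeroBox (Fin n) Y, Finset.card {f | P t f} ≤
      D ^ u.primeFactors.card * (crossRoots F i Y u).card := by
    calc ∑ t ∈ nonzeroBox (Fin n) Y, Finset.card {f | P t f}
        = ∑ f : FactorChoice τ u, Finset.card {t ∈ nonzeroBox (Fin n) Y | P t f} :=
          Finset.sum_card_bipartiteAbove_eq_sum_card_bipartiteBelow P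
      _ ≤ ∑ _f : FactorChoice τ u, (crossRoots F i Y u).card :=
          Finset.sum_le_sum fun f _ => card_proportional_le_card_crossRoots hu
            (fun p => hres p _ p.2 _) (fun p t => dvd_crossValue_of_proportional (h𝓛 p _ _)) hY
      _ ≤ _ := by
          rw [Finset.sum_const, smul_eq_mul, Finset.card_univ]
          exact Nat.mul_le_mul_right _ (card_factorChoice_le hτ)
  calc Ssumbox 𝓛 u Y
      ≤ ∑ t ∈ nonzeroBox (Fin n) Y, (u : ℝ) ^ (n - 1) * Finset.card {f | P t f} := by
        rw [Ssumbox_eq_sum]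
        exact Finset.sum_le_sum fun t _ =>
          SabsSF_le hu (fun p hp hpu j h => hres p hp hpu j (congrFun h _)) t
    _ ≤ _ := by
        rw [← Finset.mul_sum]
        gcongr
        exact_mod_cast hcount

end FactorChoice

/-! ### Averaging with the divisor bound -/

section DivisorBound

theorem exists_pow_card_primeFactors_le {K : ℝ} (hK : 1 ≤ K) {ε : ℝ} (hε : 0 < ε) :
    ∃ A : ℝ, 0 < A ∧ ∀ m : ℕ, m ≠ 0 → K ^ m.primeFactors.card ≤ A * (m : ℝ) ^ ε := by
  obtain ⟨N, hN⟩ := eventually_atTop.mp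
    (((tendsto_rpow_atTop hε).comp tendsto_natCast_atTop_atTop).eventually_ge_atTop K)
  refine ⟨K ^ N, by positivity, fun m hm => ?_⟩
  have hsmall : ∏ p ∈ m.primeFactors, (if p < N then K else 1) ≤ K ^ N := by
    rw [← Finset.prod_filter, Finset.prod_const]
    have hsub : {p ∈ m.primeFactors | p < N} ⊆ Finset.range N := fun p hp =>
      Finset.mem_range.mpr (Finset.mem_filter.mp hp).2
    exact pow_le_pow_right₀ hK ((Finset.card_le_card hsub).trans_eq (Finset.card_range N))
  have hprod : ∏ p ∈ m.primeFactors, (p : ℝ) ^ ε ≤ (m : ℝ) ^ ε := by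
    rw [Real.finsetProd_rpow _ _ fun _ _ => Nat.cast_nonneg _, ← Nat.cast_prod]
    gcongr
    exact Nat.le_of_dvd (Nat.pos_of_ne_zero hm) (Nat.prod_primeFactors_dvd m)
  calc K ^ m.primeFactors.card = ∏ _p ∈ m.primeFactors, K := by rw [Finset.prod_const]
    _ ≤ ∏ p ∈ m.primeFactors, (if p < N then K else 1) * (p : ℝ) ^ ε := by
        refine Finset.prod_le_prod (fun _ _ => by positivity) fun p hp => ?_
        split_ifs with hpN
        · exact le_mul_of_one_le_right (by positivity) <| Real.one_le_rpow
            (by exact_mod_cast (Nat.prime_of_mem_primeFactors hp).one_le) hε.le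
        · simpa using hN p (not_lt.mp hpN)
    _ ≤ K ^ N * (m : ℝ) ^ ε := by
        rw [Finset.prod_mul_distrib]
        gcongr

theorem sum_pow_card_primeFactors_le {S : Finset ℕ} {m : ℕ} (hm : m ≠ 0)
    (hsq : ∀ u ∈ S, Squarefree u) (hdvd : ∀ u ∈ S, u ∣ m) (D : ℕ) :
    ∑ u ∈ S, D ^ u.primeFactors.card ≤ (D + 1) ^ m.primeFactors.card := by
  have hinj : Set.InjOn Nat.primeFactors S := fun u hu v hv huv => by
    rw [← Nat.prod_primeFactors_of_squarefree (hsq u hu), huv,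
      Nat.prod_primeFactors_of_squarefree (hsq v hv)]
  have himage : S.image Nat.primeFactors ⊆ m.primeFactors.powerset :=
    Finset.image_subset_iff.mpr fun u hu =>
      Finset.mem_powerset.mpr (Nat.primeFactors_mono (hdvd u hu) hm)
  calc ∑ u ∈ S, D ^ u.primeFactors.card
      = ∑ s ∈ S.image Nat.primeFactors, D ^ s.card := by rw [Finset.sum_image hinj]
    _ ≤ ∑ s ∈ m.primeFactors.powerset, D ^ s.card := Finset.sum_le_sum_of_subset himage
    _ = (D + 1) ^ m.primeFactors.card := by simpa using Finset.sum_pow_mul_eq_add_pow D 1 _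

theorem exists_sum_pow_mul_card_dvd_le (α : Type*) (D : ℕ) {ε : ℝ} (hε : 0 < ε) :
    ∃ A : ℝ, 0 < A ∧ ∀ (S : Finset ℕ) (X : Finset α) (G : α → ℤ) (H : ℝ),
      (∀ u ∈ S, Squarefree u) → (∀ q ∈ X, G q ≠ 0 ∧ |(G q : ℝ)| ≤ H) →
      ((∑ u ∈ S, D ^ u.primeFactors.card * Finset.card {q ∈ X | (u : ℤ) ∣ G q} : ℕ) : ℝ) ≤
        X.card * (A * H ^ ε) := by
  obtain ⟨A, hA, hAm⟩ := exists_pow_card_primeFactors_le (K := D + 1) (by simp) hε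
  refine ⟨A, hA, fun S X G H hS hG => ?_⟩
  have hswap : ∑ u ∈ S, D ^ u.primeFactors.card * Finset.card {q ∈ X | (u : ℤ) ∣ G q} =
      ∑ q ∈ X, ∑ u ∈ S.filter fun u : ℕ => (u : ℤ) ∣ G q, D ^ u.primeFactors.card := by
    simp only [Finset.sum_filter (s := S)]
    rw [Finset.sum_comm]
    refine Finset.sum_congr rfl fun u _ => ?_
    rw [← Finset.sum_filter, Finset.sum_const, smul_eq_mul, mul_comm]
  rw [hswap, Nat.cast_sum, ← nsmul_eq_mul]
  refine Finset.sum_le_card_nsmul _ _ _ fun q hq => ?_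
  have hm : (G q).natAbs ≠ 0 := Int.natAbs_ne_zero.mpr (hG q hq).1
  calc ((∑ u ∈ S.filter fun u : ℕ => (u : ℤ) ∣ G q, D ^ u.primeFactors.card : ℕ) : ℝ)
      ≤ ((D + 1 : ℕ) : ℝ) ^ (G q).natAbs.primeFactors.card := by
        exact_mod_cast sum_pow_card_primeFactors_le hm
          (fun u hu => hS u (Finset.mem_filter.mp hu).1)
          (fun u hu => Int.natCast_dvd.mp (Finset.mem_filter.mp hu).2) D
    _ ≤ A * ((G q).natAbs : ℝ) ^ ε := by
        rw [Nat.cast_add_one]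
        exact hAm _ hm
    _ ≤ A * H ^ ε := by
        gcongr
        simpa using (hG q hq).2

end DivisorBound

theorem exists_abs_eval_le {σ : Type*} [Finite σ] (F : MvPolynomial σ ℤ) :
    ∃ M : ℝ, 0 < M ∧ ∀ (v : σ → ℤ) (Y : ℝ), 1 ≤ Y → (∀ i, |(v i : ℝ)| ≤ Y) →
      |((eval v F : ℤ) : ℝ)| ≤ M * Y ^ F.totalDegree := by
  cases nonempty_fintype σ
  refine ⟨∑ m ∈ F.support, |((coeff m F : ℤ) : ℝ)| + 1, by positivity, fun v Y hY hv => ?_⟩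
  have hmonomial : ∀ m ∈ F.support, |∏ i, (v i : ℝ) ^ m i| ≤ Y ^ F.totalDegree := fun m hm => by
    calc |∏ i, (v i : ℝ) ^ m i| = ∏ i, |(v i : ℝ)| ^ m i := by simp [Finset.abs_prod]
      _ ≤ ∏ i, Y ^ m i := by gcongr with i; exact hv i
      _ = Y ^ ∑ i, m i := Finset.prod_pow_eq_pow_sum _ _ _
      _ ≤ Y ^ F.totalDegree := by
          gcongr
          simpa [Finsupp.sum_fintype] using le_totalDegree hm
  rw [eval_eq']
  push_cast
  calc |∑ m ∈ F.support, ((coeff m F : ℤ) : ℝ) * ∏ i, (v i : ℝ) ^ m i|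
      ≤ ∑ m ∈ F.support, |((coeff m F : ℤ) : ℝ)| * Y ^ F.totalDegree := by
        refine (Finset.abs_sum_le_sum_abs _ _).trans (Finset.sum_le_sum fun m hm => ?_)
        rw [abs_mul]
        gcongr
        exact hmonomial m hm
    _ ≤ (∑ m ∈ F.support, |((coeff m F : ℤ) : ℝ)| + 1) * Y ^ F.totalDegree := by
        rw [← Finset.sum_mul]
        gcongr
        simp

section Averaging

variable {n : ℕ} {F : MvPolynomial (Fin n) ℤ} {i : Fin 2 → Fin n}

theorem exists_abs_crossValue_le (F : MvPolynomial (Fin n) ℤ) (hi : Function.Injective i) :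
    ∃ M : ℝ, 0 < M ∧ ∀ (q : Fin 2 → ℤ) (Y : ℝ), 1 ≤ Y → (∀ j, |(q j : ℝ)| ≤ Y) →
      |(crossValue F i q : ℝ)| ≤ M * Y ^ F.totalDegree := by
  obtain ⟨M, hM, hMF⟩ := exists_abs_eval_le F
  refine ⟨M, hM, fun q Y hY hq => hMF _ Y hY fun j => ?_⟩
  have hi₀₁ : i 0 ≠ i 1 := hi.ne Fin.zero_ne_one
  rcases eq_or_ne j (i 0) with rfl | h₀
  · simpa [hi₀₁] using hq 1
  rcases eq_or_ne j (i 1) with rfl | h₁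
  · simpa [hi₀₁.symm] using hq 0
  · simpa [h₀, h₁] using zero_le_one.trans hY

theorem exists_sum_pow_mul_card_crossRoots_le (D : ℕ)
    (hF : ∀ v : Fin n → ℤ, v ≠ 0 → eval v F ≠ 0) (hi : Function.Injective i)
    {ε : ℝ} (hε : 0 < ε) :
    ∃ A : ℝ, 0 < A ∧ ∀ (S : Finset ℕ) (Y : ℝ), (∀ u ∈ S, Squarefree u) → 0 ≤ Y →
      ((∑ u ∈ S, D ^ u.primeFactors.card * (crossRoots F i Y u).card : ℕ) : ℝ) ≤
        A * Y ^ (2 + ε) := by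
  set δ := ε / (F.totalDegree + 1) with hδ
  have hdeg : F.totalDegree * δ ≤ ε := by
    rw [hδ, mul_div_assoc', div_le_iff₀ (by positivity)]
    linarith
  obtain ⟨M, hM, hMF⟩ := exists_abs_crossValue_le F hi
  obtain ⟨A, hA, hsum⟩ := exists_sum_pow_mul_card_dvd_le (Fin 2 → ℤ) D (ε := δ) (by positivity)
  refine ⟨3 ^ 2 * (A * M ^ δ), by positivity, fun S Y hS hY₀ => ?_⟩
  rcases lt_or_ge Y 1 with hY | hY
  · simp only [crossRoots, nonzeroBox_eq_empty hY, Finset.filter_empty, Finset.card_empty, mul_zero,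
      Finset.sum_const_zero, Nat.cast_zero]
    positivity
  calc _ ≤ (nonzeroBox (Fin 2) Y).card * (A * (M * Y ^ F.totalDegree) ^ δ) :=
        hsum S _ (crossValue F i) _ hS fun q hq =>
          ⟨crossValue_ne_zero hF hi (mem_nonzeroBox.mp hq).1, hMF q Y hY (mem_nonzeroBox.mp hq).2⟩
    _ ≤ (3 * Y) ^ 2 * (A * (M ^ δ * Y ^ ε)) := by
        rw [Real.mul_rpow hM.le (by positivity), ← Real.rpow_natCast Y, ← Real.rpow_mul hY₀]
        gcongr
        exact card_nonzeroBox_le hY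
    _ = 3 ^ 2 * (A * M ^ δ) * Y ^ (2 + ε) := by
        rw [Real.rpow_add (by positivity), Real.rpow_two]
        ring

end Averaging

/-! ### The sum over a dyadic range -/

section Dyadic

theorem two_mul_rpow_div_rpow_lt {B u : ℝ} (hB : 3 ≤ B) (hu : 1 ≤ u) :
    2 * (u ^ ((9 : ℝ) / 10) / B ^ ((4 : ℝ) / 5)) < u := by
  have hB' : 2 < B ^ ((4 : ℝ) / 5) := by
    calc (2 : ℝ) = (2 ^ (5 : ℝ)) ^ ((1 : ℝ) / 5) := by
          rw [← Real.rpow_mul (by norm_num)]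
          norm_num
      _ < (3 ^ (4 : ℝ)) ^ ((1 : ℝ) / 5) := by gcongr; norm_num
      _ = 3 ^ ((4 : ℝ) / 5) := by
          rw [← Real.rpow_mul (by norm_num)]
          norm_num
      _ ≤ B ^ ((4 : ℝ) / 5) := by gcongr
  rw [← mul_div_assoc, div_lt_iff₀ (by positivity), mul_comm]
  calc u ^ ((9 : ℝ) / 10) * 2 ≤ u * 2 := by
        gcongr
        exact Real.rpow_le_self_of_one_le hu (by norm_num)
    _ < u * B ^ ((4 : ℝ) / 5) := by gcongr

variable {n : ℕ} {F : MvPolynomial (Fin n) ℤ} {i : Fin 2 → Fin n} {τ : ∀ p : ℕ, p.Prime → ℕ}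
  {𝓛 : ∀ (p : ℕ) (hp : p.Prime), Fin (τ p hp) → Fin n → @PadicInt p ⟨hp⟩}

theorem one_div_pow_mul_Ssumbox_le {D : ℕ} (hτ : ∀ p hp, τ p hp ≤ D) (hn : n ≠ 0)
    (h𝓛 : ∀ p hp j, linForm (𝓛 p hp j) ∣ F.map (Int.castRingHom (@PadicInt p ⟨hp⟩)))
    {B U : ℝ} (hB : 3 ≤ B) (hU : 0 < U) {u : ℕ} (hu : Squarefree u)
    (hF : ∀ p ∈ u.primeFactors, ¬(p : ℤ) ∣ eval (Pi.single (i 0) 1) F)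
    (hUu : U / 2 < u) (huU : u ≤ U) :
    1 / (u : ℝ) ^ n * Ssumbox 𝓛 u ((u : ℝ) ^ ((9 : ℝ) / 10) / B ^ ((4 : ℝ) / 5)) ≤
      2 / U * (D ^ u.primeFactors.card *
        (crossRoots F i (U ^ ((9 : ℝ) / 10) / B ^ ((4 : ℝ) / 5)) u).card : ℕ) := by
  have hu₁ : (1 : ℝ) ≤ u := by exact_mod_cast Nat.pos_of_ne_zero hu.ne_zero
  have hcount : (crossRoots F i ((u : ℝ) ^ ((9 : ℝ) / 10) / B ^ ((4 : ℝ) / 5)) u).card ≤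
      (crossRoots F i (U ^ ((9 : ℝ) / 10) / B ^ ((4 : ℝ) / 5)) u).card :=
    Finset.card_le_card (crossRoots_mono (by gcongr) u)
  have hweight : 1 / (u : ℝ) ^ n * u ^ (n - 1) ≤ 2 / U := by
    rw [← mul_pow_sub_one hn, one_div_mul_eq_div, div_mul_cancel_right₀ (by positivity),
      inv_eq_one_div, div_le_div_iff₀ (by positivity) hU]
    linarith
  calc _ ≤ 1 / (u : ℝ) ^ n * (u ^ (n - 1) * _) := by
        gcongr
        exact Ssumbox_le hτ h𝓛 hu hF (two_mul_rpow_div_rpow_lt hB hu₁)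
    _ ≤ _ := by
        rw [← mul_assoc]
        gcongr

theorem card_le_totalDegree_of_prod_linForm_dvd (hF : F ≠ 0) {p : ℕ} [Fact p.Prime] {m : ℕ}
    {c : Fin m → Fin n → ℤ_[p]} (h : ∏ j, linForm (c j) ∣ F.map (Int.castRingHom ℤ_[p])) :
    m ≤ F.totalDegree := by
  have hF' : F.map (Int.castRingHom ℤ_[p]) ≠ 0 := fun h₀ =>
    hF (map_injective _ (RingHom.injective_int _) (h₀.trans (map_zero _).symm))
  exact (le_totalDegree_of_prod_linForm_dvd hF' h).trans
    (Finset.sup_mono (support_map_subset _ _))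

theorem QUgen_le_sum_card_crossRoots {D : ℕ} (hτ : ∀ p hp, τ p hp ≤ D) (hn : n ≠ 0)
    (h𝓛 : ∀ p hp j, linForm (𝓛 p hp j) ∣ F.map (Int.castRingHom (@PadicInt p ⟨hp⟩)))
    {B U : ℝ} (hB : 3 ≤ B) (hU : 0 < U) {S : Finset ℕ} (hS : ∀ u ∈ S, Squarefree u)
    (hF : ∀ u ∈ S, ∀ p ∈ u.primeFactors, ¬(p : ℤ) ∣ eval (Pi.single (i 0) 1) F)
    (hSU : ∀ u ∈ S, U / 2 < u ∧ u ≤ U) :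
    QUgen 𝓛 S B ≤ 2 / U * (∑ u ∈ S, D ^ u.primeFactors.card *
      (crossRoots F i (U ^ ((9 : ℝ) / 10) / B ^ ((4 : ℝ) / 5)) u).card : ℕ) := by
  rw [QUgen, finsum_mem_coe_finset, Nat.cast_sum, Finset.mul_sum]
  exact Finset.sum_le_sum fun u hu =>
    one_div_pow_mul_Ssumbox_le hτ hn h𝓛 hB hU (hS u hu) (hF u hu) (hSU u hu).1 (hSU u hu).2

theorem exists_QUgen_le (hn : 2 ≤ n) (hF : ∀ v : Fin n → ℤ, v ≠ 0 → eval v F ≠ 0)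
    (h𝓛 : ∀ p hp, ∏ j, linForm (𝓛 p hp j) ∣ F.map (Int.castRingHom (@PadicInt p ⟨hp⟩)))
    {ε : ℝ} (hε : 0 < ε) :
    ∃ C : ℝ, 0 < C ∧ ∃ P : ℕ, ∀ B : ℝ, 3 ≤ B → ∀ U : ℝ, 0 < U → ∀ S : Set ℕ,
      (∀ u ∈ S, Squarefree u) → (∀ u ∈ S, ∀ p ∈ u.primeFactors, P < p) →
      (∀ u ∈ S, U / 2 < u ∧ u ≤ U) →
      QUgen 𝓛 S B ≤ C * (U ^ ((9 : ℝ) / 10) / B ^ ((4 : ℝ) / 5)) ^ (2 + ε) / U := by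
  have hF₀ : F ≠ 0 := by
    rintro rfl
    exact hF (Pi.single ⟨0, by omega⟩ 1) (by simp) (map_zero _)
  have hτ : ∀ p hp, τ p hp ≤ F.totalDegree := fun p hp =>
    have : Fact p.Prime := ⟨hp⟩
    card_le_totalDegree_of_prod_linForm_dvd hF₀ (h𝓛 p hp)
  have hdvd : ∀ p hp j, linForm (𝓛 p hp j) ∣ F.map (Int.castRingHom (@PadicInt p ⟨hp⟩)) :=
    fun p hp j => (Finset.dvd_prod_of_mem (fun j => linForm (𝓛 p hp j)) (Finset.mem_univ j)).trans
      (h𝓛 p hp)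
  let P := (eval (Pi.single (Fin.castLE hn 0) 1) F).natAbs
  have hP : 0 < P := Int.natAbs_pos.mpr (hF _ (by simp))
  obtain ⟨A, hA, hsum⟩ := exists_sum_pow_mul_card_crossRoots_le F.totalDegree hF
    (Fin.castLE_injective hn) hε
  refine ⟨2 * A, by positivity, P, fun B hB U hU S hS hSP hSU => ?_⟩
  have hfin : S.Finite := (Set.finite_Iic ⌊U⌋₊).subset fun u hu => Nat.le_floor (hSU u hu).2
  lift S to Finset ℕ using hfin
  have hSF : ∀ u ∈ S, ∀ p ∈ u.primeFactors, ¬(p : ℤ) ∣ eval (Pi.single (Fin.castLE hn 0) 1) F :=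
    fun u hu p hp hpF => Nat.not_dvd_of_pos_of_lt hP (hSP u hu p hp) (Int.natCast_dvd.mp hpF)
  calc QUgen 𝓛 S B
      ≤ 2 / U * (∑ u ∈ S, F.totalDegree ^ u.primeFactors.card *
          (crossRoots F (Fin.castLE hn) (U ^ ((9 : ℝ) / 10) / B ^ ((4 : ℝ) / 5)) u).card : ℕ) :=
        QUgen_le_sum_card_crossRoots hτ (by omega) hdvd hB hU hS hSF hSU
    _ ≤ 2 / U * (A * (U ^ ((9 : ℝ) / 10) / B ^ ((4 : ℝ) / 5)) ^ (2 + ε)) := by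
        gcongr
        exact hsum S _ hS (by positivity)
    _ = 2 * A * (U ^ ((9 : ℝ) / 10) / B ^ ((4 : ℝ) / 5)) ^ (2 + ε) / U := by ring

theorem mul_rpow_div_rpow_rpow_div_le {C B U : ℝ} (hC : 0 ≤ C) (hB : 3 ≤ B) (hU : 0 < U) :
    C * (U ^ ((9 : ℝ) / 10) / B ^ ((4 : ℝ) / 5)) ^ (2 + (1 : ℝ) / 9) / U ≤
      C * U ^ ((9 : ℝ) / 10) * Real.log B ^ (1 : ℝ) / B ^ ((8 : ℝ) / 5) := by
  have hlog : 1 ≤ Real.log B := by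
    rw [Real.le_log_iff_exp_le (by positivity)]
    linarith [Real.exp_one_lt_three]
  have hUpow : U ^ ((9 : ℝ) / 10 * (2 + 1 / 9)) / U = U ^ ((9 : ℝ) / 10) := by
    rw [← Real.rpow_sub_one hU.ne']
    norm_num
  have hBpow : B ^ ((8 : ℝ) / 5) ≤ B ^ ((4 : ℝ) / 5 * (2 + 1 / 9)) :=
    Real.rpow_le_rpow_of_exponent_le (by linarith) (by norm_num)
  calc C * (U ^ ((9 : ℝ) / 10) / B ^ ((4 : ℝ) / 5)) ^ (2 + (1 : ℝ) / 9) / U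
      = C * (U ^ ((9 : ℝ) / 10 * (2 + 1 / 9)) / U) / B ^ ((4 : ℝ) / 5 * (2 + 1 / 9)) := by
        rw [Real.div_rpow (by positivity) (by positivity), ← Real.rpow_mul hU.le,
          ← Real.rpow_mul (by positivity)]
        ring
    _ ≤ C * U ^ ((9 : ℝ) / 10) * Real.log B ^ (1 : ℝ) / B ^ ((8 : ℝ) / 5) := by
        rw [hUpow, Real.rpow_one]
        exact div_le_div₀ (by positivity) (le_mul_of_one_le_right (by positivity) hlog)
          (by positivity) hBpow

end Dyadic

theorem stmt18_general {n : ℕ} (hn : 2 ≤ n) {F : MvPolynomial (Fin n) ℤ}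
    (hF : ∀ v : Fin n → ℤ, v ≠ 0 → eval v F ≠ 0) {τ : ∀ p : ℕ, p.Prime → ℕ}
    {𝓛 : ∀ (p : ℕ) (hp : p.Prime), Fin (τ p hp) → Fin n → @PadicInt p ⟨hp⟩}
    (h𝓛 : ∀ p hp, ∏ j, linForm (𝓛 p hp j) ∣ F.map (Int.castRingHom (@PadicInt p ⟨hp⟩)))
    {ξ₁ : ℝ → ℝ} (hξ : Tendsto ξ₁ atTop atTop) {ε : ℝ} (hε : 0 < ε) :
    ∃ C : ℝ, 0 < C ∧ ∃ B₀ : ℝ, 3 ≤ B₀ ∧ ∀ B : ℝ, B₀ ≤ B → ∀ U : ℝ, 0 < U → ∀ ξ₂ ξ₃ : ℝ,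
      QUgen 𝓛 {u ∈ U2set (ξ₁ B) ξ₂ ξ₃ | U / 2 < (u : ℝ) ∧ (u : ℝ) ≤ U} B ≤
        C * (U ^ ((9 : ℝ) / 10) / B ^ ((4 : ℝ) / 5)) ^ (2 + ε) / U := by
  obtain ⟨C, hC, P, hQ⟩ := exists_QUgen_le hn hF h𝓛 hε
  obtain ⟨B₁, hB₁⟩ := eventually_atTop.mp (hξ.eventually_ge_atTop (P : ℝ))
  refine ⟨C, hC, max 3 B₁, le_max_left _ _, fun B hB U hU ξ₂ ξ₃ => ?_⟩
  refine hQ B (le_of_max_le_left hB) U hU _ (fun u hu => hu.1.2.2.1) (fun u hu p hp => ?_)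
    fun u hu => hu.2
  exact_mod_cast (hB₁ B (le_of_max_le_right hB)).trans_lt (hu.1.2.2.2 p hp).1

theorem stmt18 (n d k : ℕ) (hn : 2 ≤ n) (hd : n < d) (hk : 2 ≤ k)
    (F : MvPolynomial (Fin n) ℤ) (L : Fin d → Fin n → ℂ)
    (hF : IsDecomp F L) (hirr : Irreducible (F.map (Int.castRingHom ℚ)))
    (hΔ : discProd L ≠ 0)
    (ξ₁ : ℝ → ℝ) (hξ : Xi1Good ξ₁) (C₁ : ℝ) (hC₁ : 0 < C₁)
    (τ : ∀ p : ℕ, p.Prime → ℕ)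
    (𝓛 : ∀ (p : ℕ) (hp : p.Prime), Fin (τ p hp) → Fin n → @PadicInt p ⟨hp⟩)
    (Fstar : ∀ (p : ℕ) (hp : p.Prime), MvPolynomial (Fin n) (@PadicInt p ⟨hp⟩))
    (hfact : ∀ (p : ℕ) (hp : p.Prime), IsPadicFact F p hp (𝓛 p hp) (Fstar p hp)) :
    ∃ C₅ C : ℝ, 0 < C₅ ∧ 0 < C ∧ ∃ B₀ : ℝ, ∀ B : ℝ, B₀ ≤ B → ∀ U : ℝ, 1 < U →
      QUgen 𝓛 {u ∈ U2set (ξ₁ B) (xi2 n B) (xi3 C₁ k B) |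
          U / 2 < (u : ℝ) ∧ (u : ℝ) ≤ U} B
        ≤ C * U ^ ((9 : ℝ) / 10) * Real.log B ^ C₅ / B ^ ((8 : ℝ) / 5) := by
  -- With `ε = 1/9` the exponent of `U` is `(9/10) * (2 + ε) - 1 = 9/10`.
  obtain ⟨C, hC, B₀, hB₀, hQ⟩ := stmt18_general (ε := 1 / 9) hn
    (fun v hv => eval_ne_zero_of_irreducible hd.le hF.2 hirr hΔ hv)
    (fun p hp => Dvd.intro_left _ (hfact p hp).1.symm) hξ.2.1 (by norm_num)
  exact ⟨1, C, one_pos, hC, B₀, fun B hB U hU => (hQ B hB U (by linarith) _ _).trans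
    (mul_rpow_div_rpow_rpow_div_le hC.le (hB₀.trans hB) (by linarith))⟩

end
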